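/- Let N ≥ 2 be an integer and let m be an integer with 1 ≤ m ≤ N. Then Σ_{α=1}^{N−1} η_α^m / (η_α − 1) = (N+1)/2 − m. -/

import Mathlib

open Finset

/-- The roots of unity `η_α = exp(2πiα/N)`. -/
noncomputable def η (N α : ℕ) : ℂ :=
  Complex.exp (2 * Real.pi * Complex.I * α / N)

theorem eta_eq_pow (N α : ℕ) : η N α = η N 1 ^ α := by
  unfold η
  rw [← Complex.exp_nat_mul]
  congr 1
  push_cast
  ring

theorem eta_prim (N : ℕ) (hN : N ≠ 0) : IsPrimitiveRoot (η N 1) N := by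
  have h := Complex.isPrimitiveRoot_exp N hN
  unfold η
  simpa using h

theorem prim_sum (n : ℕ) (z : ℂ) (hz : IsPrimitiveRoot z (n + 1)) (m : ℕ) (h1 : 1 ≤ m)
    (h2 : m ≤ n) :
    ∑ j ∈ Finset.range n, (z ^ (j + 1)) ^ m = -1 := by
  have hne : z ^ m ≠ 1 := hz.pow_ne_one_of_pos_of_lt (by omega) (by omega)
  have hg := mul_neg_geom_sum (z ^ m) (n + 1)
  have hp : (z ^ m) ^ (n + 1) = 1 := by
    rw [← pow_mul, mul_comm, pow_mul, hz.pow_eq_one, one_pow]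
  rw [hp, sub_self] at hg
  have h0 := (mul_eq_zero.mp hg).resolve_left (sub_ne_zero.mpr hne.symm)
  rw [Finset.sum_range_succ', pow_zero] at h0
  have : ∑ j ∈ Finset.range n, (z ^ (j + 1)) ^ m = ∑ j ∈ Finset.range n, (z ^ m) ^ (j + 1) :=
    Finset.sum_congr rfl fun j _ => by rw [← pow_mul, ← pow_mul, mul_comm]
  rw [this]
  exact eq_neg_of_add_eq_zero_left h0

theorem prim_main (n : ℕ) (z : ℂ) (hz : IsPrimitiveRoot z (n + 1)) (m : ℕ) (h1 : 1 ≤ m)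
    (h2 : m ≤ n + 1) :
    ∑ j ∈ Finset.range n, (z ^ (j + 1)) ^ m / (z ^ (j + 1) - 1) = ((n : ℂ) + 2) / 2 - m := by
  have hne : ∀ j ∈ Finset.range n, z ^ (j + 1) - 1 ≠ 0 := fun j hj =>
    sub_ne_zero.mpr (hz.pow_ne_one_of_pos_of_lt (by omega) (by
      have := Finset.mem_range.mp hj; omega))
  induction m, h1 using Nat.le_induction with
  | base =>
    have hr := Finset.sum_range_reflect
      (fun j => (z ^ (j + 1)) ^ 1 / (z ^ (j + 1) - 1)) n
    have hs : ∑ j ∈ Finset.range n, ((z ^ (j + 1)) ^ 1 / (z ^ (j + 1) - 1)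
        + (z ^ (n - 1 - j + 1)) ^ 1 / (z ^ (n - 1 - j + 1) - 1)) = (n : ℂ) := by
      rw [Finset.sum_congr rfl (g := fun _ => (1 : ℂ))]
      · simp
      · intro j hj
        have hj' := Finset.mem_range.mp hj
        have ha := hne j hj
        have hb := hne (n - 1 - j) (Finset.mem_range.mpr (by omega))
        have hab : z ^ (j + 1) * z ^ (n - 1 - j + 1) = 1 := by
          rw [← pow_add, show j + 1 + (n - 1 - j + 1) = n + 1 by omega, hz.pow_eq_one]
        rw [pow_one, pow_one, div_add_div _ _ ha hb, div_eq_one_iff_eq (mul_ne_zero ha hb)]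
        linear_combination hab
    rw [Finset.sum_add_distrib, hr] at hs
    push_cast
    linear_combination hs / 2
  | succ m hm ih =>
    have ih := ih (by omega)
    have hs := prim_sum n z hz m hm (by omega)
    have : ∑ j ∈ Finset.range n, (z ^ (j + 1)) ^ (m + 1) / (z ^ (j + 1) - 1)
        = ∑ j ∈ Finset.range n, ((z ^ (j + 1)) ^ m / (z ^ (j + 1) - 1) + (z ^ (j + 1)) ^ m) := by
      refine Finset.sum_congr rfl fun j hj => ?_
      have ha := hne j hj
      rw [div_add' _ _ _ ha]
      congr 1
      ring
    rw [this, Finset.sum_add_distrib, ih, hs]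
    push_cast
    ring

theorem stmt12 (N : ℕ) (hN : 2 ≤ N) (m : ℕ) (hm1 : 1 ≤ m) (hm2 : m ≤ N) :
    ∑ α ∈ Finset.Icc 1 (N - 1), η N α ^ m / (η N α - 1) = ((N : ℂ) + 1) / 2 - m := by
  obtain ⟨n, rfl⟩ : ∃ n, N = n + 1 := ⟨N - 1, by omega⟩
  have h := prim_main n _ (eta_prim (n + 1) (by omega)) m hm1 hm2
  have hI : Finset.Icc 1 (n + 1 - 1) = Finset.Ico 1 (n + 1) := by
    ext x
    simp only [Finset.mem_Icc, Finset.mem_Ico]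
    omega
  rw [hI, Finset.sum_Ico_eq_sum_range]
  simp only [Nat.add_sub_cancel]
  rw [Finset.sum_congr rfl (fun j _ => by rw [eta_eq_pow (n + 1) (1 + j), add_comm 1 j]), h]
  push_cast
  ring
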